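/- For a in g let J_a = a + \sum_{\alpha\in S}\phi^\alpha\phi_{[u_\alpha,a]} and K_a = J_{\pi_{\leq}a} - (-1)^{p(a)}\Phi_a - (a|f), where \pi_{\leq} is the projection of g onto \bigoplus_{i\leq 0}g(i). Then d_{(0)}(J_a) = \sum_{\alpha\in S}(-1)^{p(\alpha)}\phi^\alpha K_{[u_\alpha,a]} + \sum_{\alpha\in S} k(-1)^{p(\alpha)}(u_\alpha|a)\,\partial\phi^\alpha. -/

import Mathlib

open Polynomial

noncomputable section

/-- A finite-dimensional Lie superalgebra `g` over `ℂ` together with an even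
`sl₂`-triple `(e, h = 2x, f)` and a supersymmetric invariant bilinear form,
normalised by `(e|f) = 2(x|x) = 1`.  The parity of `g` is encoded by the grading
involution `σg` (`σg a = a` for even `a` and `σg a = -a` for odd `a`). -/
structure SuperSetup (g : Type) [AddCommGroup g] [Module ℂ g] where
  lie : g →ₗ[ℂ] g →ₗ[ℂ] g
  σg : g →ₗ[ℂ] g
  σg_invol : ∀ a, σg (σg a) = a
  σg_lie : ∀ a b, σg (lie a b) = lie (σg a) (σg b)
  lie_skew : ∀ a b, (σg a = a ∨ σg b = b) → lie a b = - lie b a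
  lie_skew_odd : ∀ a b, σg a = -a → σg b = -b → lie a b = lie b a
  jacobi : ∀ a b c, (σg a = a ∨ σg b = b) →
    lie a (lie b c) = lie (lie a b) c + lie b (lie a c)
  jacobi_odd : ∀ a b c, σg a = -a → σg b = -b →
    lie a (lie b c) = lie (lie a b) c - lie b (lie a c)
  form : g →ₗ[ℂ] g →ₗ[ℂ] ℂ
  form_invariant : ∀ a b c, form (lie a b) c = form a (lie b c)
  form_super : ∀ a b, form (σg a) (σg b) = form a b
  e : g
  x : g
  f : g
  e_even : σg e = e
  x_even : σg x = x
  f_even : σg f = f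
  lie_xe : lie x e = e
  lie_xf : lie x f = - f
  lie_ef : lie e f = (2 : ℂ) • x
  form_ef : form e f = 1
  form_xx : form x x = 1 / 2

namespace SuperSetup

variable {g : Type} [AddCommGroup g] [Module ℂ g]

/-- The `ad x`-eigenspace `g(i)`. -/
def gwt (D : SuperSetup g) (i : ℚ) : Submodule ℂ g :=
  LinearMap.ker (D.lie D.x - (i : ℂ) • LinearMap.id)

/-- `n = ⊕_{i > 0} g(i)`. -/
def nplus (D : SuperSetup g) : Submodule ℂ g := ⨆ i : {i : ℚ // 0 < i}, D.gwt i
/-- `n₋ = ⊕_{i < 0} g(i)`. -/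
def nminus (D : SuperSetup g) : Submodule ℂ g := ⨆ i : {i : ℚ // i < 0}, D.gwt i
/-- `m = ⊕_{i ≥ 1} g(i)`. -/
def mm (D : SuperSetup g) : Submodule ℂ g := ⨆ i : {i : ℚ // 1 ≤ i}, D.gwt i
/-- `⊕_{i ≤ 0} g(i)`. -/
def gle (D : SuperSetup g) : Submodule ℂ g := ⨆ i : {i : ℚ // i ≤ 0}, D.gwt i
/-- `⊕_{i ≤ 1} g(i)`. -/
def gle1 (D : SuperSetup g) : Submodule ℂ g := ⨆ i : {i : ℚ // i ≤ 1}, D.gwt i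
/-- `⊕_{i < 1} g(i)`. -/
def glt1 (D : SuperSetup g) : Submodule ℂ g := ⨆ i : {i : ℚ // i < 1}, D.gwt i
/-- The centraliser `g^f = {a ∈ g | [a, f] = 0}`. -/
def gf (D : SuperSetup g) : Submodule ℂ g := LinearMap.ker (D.lie.flip D.f)

end SuperSetup

/-- `a` is a homogeneous element of parity sign `ε ∈ {1, -1}`. -/
def IsParity {g : Type} [AddCommGroup g] [Module ℂ g] (D : SuperSetup g)
    (a : g) (ε : ℂ) : Prop :=
  (ε = 1 ∧ D.σg a = a) ∨ (ε = -1 ∧ D.σg a = -a)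

section PolyHelpers

variable {A : Type} [Ring A] [Algebra ℂ A]

/-- Apply the linear endomorphism `δ` to every coefficient of a polynomial. -/
def cmap (δ : A →ₗ[ℂ] A) (P : Polynomial A) : Polynomial A :=
  P.sum fun n c => Polynomial.monomial n (δ c)

/-- Substitution `λ ↦ -λ - ∂` (with `∂ = δ` acting on the coefficients). -/
def oppSubst (δ : A →ₗ[ℂ] A) (P : Polynomial A) : Polynomial A :=
  P.sum fun n c => ∑ k ∈ Finset.range (n + 1),
    Polynomial.monomial k ((((-1 : ℂ) ^ n * (n.choose k : ℂ))) • ((δ ^ (n - k)) c))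

/-- `[a_λ [b_μ c]]` as an element of `(A[λ])[μ]` (the outer variable is `μ`). -/
def jacLeft (Br : A →ₗ[ℂ] A →ₗ[ℂ] Polynomial A) (a : A) (P : Polynomial A) :
    Polynomial (Polynomial A) :=
  P.sum fun m c => Polynomial.monomial m (Br a c)

/-- `[b_μ [a_λ c]]` as an element of `(A[λ])[μ]` (the outer variable is `μ`). -/
def jacRight (Br : A →ₗ[ℂ] A →ₗ[ℂ] Polynomial A) (b : A) (P : Polynomial A) :
    Polynomial (Polynomial A) :=
  P.sum fun n c => (Br b c).sum fun m d => Polynomial.monomial m (Polynomial.monomial n d)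

/-- `Q(λ + μ)` as an element of `(A[λ])[μ]`. -/
def substAdd (Q : Polynomial A) : Polynomial (Polynomial A) :=
  Q.sum fun m c => ∑ k ∈ Finset.range (m + 1),
    Polynomial.monomial k (Polynomial.monomial (m - k) ((m.choose k : ℂ) • c))

/-- `[[a_λ b]_{λ+μ} c]` as an element of `(A[λ])[μ]`. -/
def jacMid (Br : A →ₗ[ℂ] A →ₗ[ℂ] Polynomial A) (P : Polynomial A) (c : A) :
    Polynomial (Polynomial A) :=
  P.sum fun j d => Polynomial.C (Polynomial.X ^ j : Polynomial A) * substAdd (Br d c)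

end PolyHelpers

/-- A Poisson vertex superalgebra structure on a unital associative `ℂ`-algebra `A`:
a supercommutative product (the parity being encoded by the involution `σ`), an even
derivation `δ = ∂`, and a `λ`-bracket `Br` (with values in `A[λ]`) satisfying
sesquilinearity, skewsymmetry, the Jacobi identity and the Leibniz rules. -/
structure PVA (A : Type) [Ring A] [Algebra ℂ A] where
  σ : A →ₐ[ℂ] A
  σ_invol : ∀ a, σ (σ a) = a
  supercomm : ∀ a b : A, (σ a = a ∨ σ b = b) → a * b = b * a
  supercomm_odd : ∀ a b : A, σ a = -a → σ b = -b → a * b = -(b * a)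
  δ : A →ₗ[ℂ] A
  δ_der : ∀ a b, δ (a * b) = δ a * b + a * δ b
  δ_even : ∀ a, σ (δ a) = δ (σ a)
  Br : A →ₗ[ℂ] A →ₗ[ℂ] Polynomial A
  br_parity : ∀ a b n, σ ((Br a b).coeff n) = (Br (σ a) (σ b)).coeff n
  sesq_left : ∀ a b, Br (δ a) b = -(Polynomial.X * Br a b)
  sesq_right : ∀ a b, Br a (δ b) = Polynomial.X * Br a b + cmap δ (Br a b)
  leibniz : ∀ a b c, (σ a = a ∨ σ b = b) →
    Br a (b * c) = Polynomial.C b * Br a c + Br a b * Polynomial.C c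
  leibniz_odd : ∀ a b c, σ a = -a → σ b = -b →
    Br a (b * c) = -(Polynomial.C b * Br a c) + Br a b * Polynomial.C c
  skew : ∀ a b, (σ a = a ∨ σ b = b) → Br a b = - oppSubst δ (Br b a)
  skew_odd : ∀ a b, σ a = -a → σ b = -b → Br a b = oppSubst δ (Br b a)
  jac : ∀ a b c, (σ a = a ∨ σ b = b) →
    jacLeft Br a (Br b c) = jacMid Br (Br a b) c + jacRight Br b (Br a c)
  jac_odd : ∀ a b c, σ a = -a → σ b = -b →
    jacLeft Br a (Br b c) = jacMid Br (Br a b) c - jacRight Br b (Br a c)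

/-- Dual bases `{u_α}, {u^α}` (indexed by `I = \bar S`) of the Lie superalgebra,
compatible with the parity and the `ad x`-grading, with `(u_α | u^β) = δ_{αβ}`. -/
structure BasisData {g : Type} [AddCommGroup g] [Module ℂ g] (D : SuperSetup g)
    (I : Type) [Fintype I] [DecidableEq I] where
  u : I → g
  udual : I → g
  jdeg : I → ℚ
  par : I → Bool
  hu : ∀ α, u α ∈ D.gwt (jdeg α)
  hud : ∀ α, udual α ∈ D.gwt (-(jdeg α))
  hσu : ∀ α, D.σg (u α) = (if par α then (-1 : ℂ) else 1) • u α
  hσud : ∀ α, D.σg (udual α) = (if par α then (-1 : ℂ) else 1) • udual α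
  hdual : ∀ α β, D.form (u α) (udual β) = if α = β then 1 else 0
  compl : ∀ a : g, (∑ α, D.form a (udual α) • u α) = a
  basisu : LinearIndependent ℂ u
  spanu : Submodule.span ℂ (Set.range u) = ⊤

namespace BasisData

variable {g : Type} [AddCommGroup g] [Module ℂ g] {D : SuperSetup g}
  {I : Type} [Fintype I] [DecidableEq I]

/-- The index set `S` of the dual bases of `n` and `n₋`. -/
def S (Bs : BasisData D I) : Finset I := Finset.univ.filter fun α => 0 < Bs.jdeg α

/-- The index set `S(1/2)` of the basis of `g(1/2)`. -/
def Shalf (Bs : BasisData D I) : Finset I := Finset.univ.filter fun α => Bs.jdeg α = 1 / 2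

/-- The sign `(-1)^{p(α)}`. -/
def sgn (Bs : BasisData D I) (α : I) : ℂ := if Bs.par α then -1 else 1

/-- The projection of `g` onto `⊕_{i ≤ 0} g(i)` determined by the dual bases. -/
def πle (Bs : BasisData D I) (a : g) : g :=
  ∑ α ∈ Finset.univ.filter (fun α => Bs.jdeg α ≤ 0), D.form a (Bs.udual α) • Bs.u α

end BasisData

/-- A realization of the Poisson vertex algebra `S(R)` of the classical BRST complex,
where `R = Cur_k(g) ⊕ R_ch ⊕ R_ne`:  `ι` are the currents, `φc a = φ_{π₊ a}`,
`φd a = φ^{π₋ a}` are the charged free fermions and `Φn a = Φ_{π_{1/2} a}` are the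
neutral free fermions, with the `λ`-brackets of the generators as in the paper. -/
structure BRST {g : Type} [AddCommGroup g] [Module ℂ g] (D : SuperSetup g)
    {I : Type} [Fintype I] [DecidableEq I] (Bs : BasisData D I)
    {A : Type} [Ring A] [Algebra ℂ A] (P : PVA A) (k : ℂ) where
  ι : g →ₗ[ℂ] A
  φc : g →ₗ[ℂ] A
  φd : g →ₗ[ℂ] A
  Φn : g →ₗ[ℂ] A
  σι : ∀ a, P.σ (ι a) = ι (D.σg a)
  σφc : ∀ a, P.σ (φc a) = - φc (D.σg a)
  σφd : ∀ a, P.σ (φd a) = - φd (D.σg a)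
  σΦ : ∀ a, P.σ (Φn a) = Φn (D.σg a)
  φc_proj : ∀ i : ℚ, i ≤ 0 → ∀ a ∈ D.gwt i, φc a = 0
  φd_proj : ∀ i : ℚ, 0 ≤ i → ∀ a ∈ D.gwt i, φd a = 0
  Φn_proj : ∀ i : ℚ, i ≠ 1 / 2 → ∀ a ∈ D.gwt i, Φn a = 0
  br_cur : ∀ a b, P.Br (ι a) (ι b) =
    Polynomial.C (ι (D.lie a b)) + Polynomial.monomial 1 (algebraMap ℂ A (k * D.form a b))
  br_φφ : ∀ a b, P.Br (φc a) (φc b) = 0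
  br_φdφd : ∀ a b, P.Br (φd a) (φd b) = 0
  br_φφd : ∀ i j : ℚ, 0 < i → j < 0 → ∀ a ∈ D.gwt i, ∀ b ∈ D.gwt j,
    P.Br (φc a) (φd b) = Polynomial.C (algebraMap ℂ A (D.form a b))
  br_ΦΦ : ∀ a ∈ D.gwt (1 / 2 : ℚ), ∀ b ∈ D.gwt (1 / 2 : ℚ),
    P.Br (Φn a) (Φn b) = Polynomial.C (algebraMap ℂ A (D.form D.f (D.lie a b)))
  br_curφc : ∀ a b, P.Br (ι a) (φc b) = 0
  br_curφd : ∀ a b, P.Br (ι a) (φd b) = 0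
  br_curΦ : ∀ a b, P.Br (ι a) (Φn b) = 0
  br_φcΦ : ∀ a b, P.Br (φc a) (Φn b) = 0
  br_φdΦ : ∀ a b, P.Br (φd a) (Φn b) = 0

namespace BRST

variable {g : Type} [AddCommGroup g] [Module ℂ g] {D : SuperSetup g}
  {I : Type} [Fintype I] [DecidableEq I] {Bs : BasisData D I}
  {A : Type} [Ring A] [Algebra ℂ A] {P : PVA A} {k : ℂ}

/-- The element
`d = ∑_{α∈S} (-1)^{p(α)} φ^α u_α + ∑_{α∈S(1/2)} φ^α Φ_α + φ^f
  + (1/2) ∑_{α,β∈S} (-1)^{p(α)} φ^α φ^β φ_{[u_β, u_α]}` of `S(R)`. -/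
def dd (R : BRST D Bs P k) : A :=
  (∑ α ∈ Bs.S, Bs.sgn α • (R.φd (Bs.udual α) * R.ι (Bs.u α)))
    + (∑ α ∈ Bs.Shalf, R.φd (Bs.udual α) * R.Φn (Bs.u α))
    + R.φd D.f
    + (1 / 2 : ℂ) • ∑ α ∈ Bs.S, ∑ β ∈ Bs.S,
        Bs.sgn α • (R.φd (Bs.udual α) * (R.φd (Bs.udual β) * R.φc (D.lie (Bs.u β) (Bs.u α))))

/-- The differential `d_{(0)} : S(R) → S(R)`, `a ↦ {d_λ a}|_{λ=0}`. -/
def d0 (R : BRST D Bs P k) : A →ₗ[ℂ] A where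
  toFun a := (P.Br R.dd a).coeff 0
  map_add' a b := by simp
  map_smul' c a := by simp

/-- The building block `J_a = a + ∑_{α∈S} φ^α φ_{[u_α, a]}`. -/
def Jel (R : BRST D Bs P k) (a : g) : A :=
  R.ι a + ∑ α ∈ Bs.S, R.φd (Bs.udual α) * R.φc (D.lie (Bs.u α) a)

/-- The building block `K_a = J_{π_≤ a} - (-1)^{p(a)} Φ_a - (a|f)`
(for `a` homogeneous of parity sign `ε`). -/
def Kel (R : BRST D Bs P k) (a : g) (ε : ℂ) : A :=
  R.Jel (Bs.πle a) - ε • R.Φn a - algebraMap ℂ A (D.form a D.f)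

/-- The subalgebra `S(R₋)` of `S(R)`, where
`R₋ = ℂ[∂] ⊗ (J_{g_≤} ⊕ φ^{n₋} ⊕ Φ_{g(1/2)})`. -/
def Aminus (R : BRST D Bs P k) : Subalgebra ℂ A :=
  Algebra.adjoin ℂ
    ({y : A | ∃ (n : ℕ) (i : ℚ) (a : g), i ≤ 0 ∧ a ∈ D.gwt i ∧ y = (P.δ ^ n) (R.Jel a)}
      ∪ {y : A | ∃ (n : ℕ) (j : ℚ) (b : g), j < 0 ∧ b ∈ D.gwt j ∧ y = (P.δ ^ n) (R.φd b)}
      ∪ {y : A | ∃ (n : ℕ) (c : g), c ∈ D.gwt (1 / 2 : ℚ) ∧ y = (P.δ ^ n) (R.Φn c)})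

/-- The subalgebra `S(R₊)` of `S(R)`, where `R₊ = ℂ[∂] ⊗ (φ_n ⊕ d_{(0)}(φ_n))`. -/
def Aplus (R : BRST D Bs P k) : Subalgebra ℂ A :=
  Algebra.adjoin ℂ
    ({y : A | ∃ (n : ℕ) (i : ℚ) (a : g), 0 < i ∧ a ∈ D.gwt i ∧ y = (P.δ ^ n) (R.φc a)}
      ∪ {y : A | ∃ (n : ℕ) (i : ℚ) (a : g), 0 < i ∧ a ∈ D.gwt i ∧
          y = (P.δ ^ n) (R.d0 (R.φc a))})

end BRST

/-!
Since `d_{(0)}` is an odd derivation, it suffices to know it on currents and on fermions.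
Computing `d_{(0)} φ_b` shows that `K_b = J_b - d_{(0)} φ_b`.  Applying the derivation to
`J_a = a + ∑ φ^α φ_{[u_α,a]}` therefore gives the claimed sum, except that the ghost part of
`J_{[u_α,a]}` has to come from the terms `(d_{(0)} φ^α) φ_{[u_α,a]}`.  This is the
Maurer–Cartan equation `d_{(0)} φ^γ = 1/2 ∑ (-1)^{p(α)} ([u_β,u_α]|u^γ) φ^α φ^β`: by the
Jacobi identity its two halves contribute equally once the product `φ^α φ^β` is reordered.
-/

section Parity

/-- The sign `(-1)^p` of a parity `p`, with `true` for odd as in `BasisData.par`.  The Koszul sign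
`(-1)^{pq}` is written `paritySign (p && q)`. -/
def paritySign (p : Bool) : ℂ := if p then -1 else 1

lemma paritySign_not (p : Bool) : paritySign (!p) = -paritySign p := by
  cases p <;> simp [paritySign]

lemma paritySign_xor (p q : Bool) : paritySign (p ^^ q) = paritySign p * paritySign q := by
  cases p <;> cases q <;> simp [paritySign]

lemma paritySign_mul_self (p : Bool) : paritySign p * paritySign p = 1 := by
  cases p <;> simp [paritySign]

lemma paritySign_and_not (p q : Bool) :
    paritySign (p && !q) = paritySign p * paritySign (p && q) := by
  cases p <;> cases q <;> simp [paritySign]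

lemma paritySign_not_and_not (p q : Bool) :
    paritySign (!p && !q) = -(paritySign p * paritySign q * paritySign (p && q)) := by
  cases p <;> cases q <;> simp [paritySign]

end Parity

section OppSubst

variable {A : Type} [Ring A] [Algebra ℂ A]

lemma oppSubst_C (δ : A →ₗ[ℂ] A) (u : A) : oppSubst δ (C u) = C u := by
  simp [oppSubst, sum_C_index]

lemma coeff_zero_oppSubst_C_add_monomial_one (δ : A →ₗ[ℂ] A) (u v : A) :
    (oppSubst δ (C u + monomial 1 v)).coeff 0 = u - δ v := by
  rw [oppSubst, sum_add_index, sum_C_index, sum_monomial_index]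
  · simp [Finset.sum_range_succ, coeff_monomial, sub_eq_add_neg]
  · simp
  · simp
  · simp
  · simp [Finset.sum_add_distrib]

end OppSubst

namespace PVA

variable {A : Type} [Ring A] [Algebra ℂ A] (P : PVA A)

/-- The elements of `A` of parity `p`. -/
def parityPart (p : Bool) : Submodule ℂ A :=
  Module.End.eigenspace P.σ.toLinearMap (paritySign p)

variable {P} {p q : Bool} {a b : A}

lemma mem_parityPart : a ∈ P.parityPart p ↔ P.σ a = paritySign p • a :=
  Module.End.mem_eigenspace_iff

lemma mem_parityPart_false : a ∈ P.parityPart false ↔ P.σ a = a := by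
  simp [mem_parityPart, paritySign]

lemma mem_parityPart_true : a ∈ P.parityPart true ↔ P.σ a = -a := by
  simp [mem_parityPart, paritySign]

lemma mul_mem_parityPart (ha : a ∈ P.parityPart p) (hb : b ∈ P.parityPart q) :
    a * b ∈ P.parityPart (p ^^ q) := by
  rw [mem_parityPart] at *
  rw [map_mul, ha, hb, smul_mul_smul_comm, paritySign_xor]

lemma mul_eq_koszul_smul_mul (ha : a ∈ P.parityPart p) (hb : b ∈ P.parityPart q) :
    a * b = paritySign (p && q) • (b * a) := by
  match p, q with
  | false, _ => simpa [paritySign] using P.supercomm a b (.inl (mem_parityPart_false.1 ha))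
  | true, false => simpa [paritySign] using P.supercomm a b (.inr (mem_parityPart_false.1 hb))
  | true, true =>
    simpa [paritySign] using
      P.supercomm_odd a b (mem_parityPart_true.1 ha) (mem_parityPart_true.1 hb)

lemma br_mul (ha : a ∈ P.parityPart p) (hb : b ∈ P.parityPart q) (c : A) :
    P.Br a (b * c) = P.Br a b * C c + paritySign (p && q) • (C b * P.Br a c) := by
  rw [add_comm]
  match p, q with
  | false, _ => simpa [paritySign] using P.leibniz a b c (.inl (mem_parityPart_false.1 ha))
  | true, false => simpa [paritySign] using P.leibniz a b c (.inr (mem_parityPart_false.1 hb))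
  | true, true =>
    simpa [paritySign] using
      P.leibniz_odd a b c (mem_parityPart_true.1 ha) (mem_parityPart_true.1 hb)

lemma br_eq_neg_koszul_smul_oppSubst (ha : a ∈ P.parityPart p) (hb : b ∈ P.parityPart q) :
    P.Br a b = -paritySign (p && q) • oppSubst P.δ (P.Br b a) := by
  match p, q with
  | false, _ => simpa [paritySign] using P.skew a b (.inl (mem_parityPart_false.1 ha))
  | true, false => simpa [paritySign] using P.skew a b (.inr (mem_parityPart_false.1 hb))
  | true, true =>
    simpa [paritySign] using
      P.skew_odd a b (mem_parityPart_true.1 ha) (mem_parityPart_true.1 hb)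

lemma br_eq_C_of_br_swap {u : A} (ha : a ∈ P.parityPart p) (hb : b ∈ P.parityPart q)
    (h : P.Br b a = C u) : P.Br a b = C (-paritySign (p && q) • u) := by
  rw [br_eq_neg_koszul_smul_oppSubst ha hb, h, oppSubst_C, smul_C]

lemma br_eq_zero_of_br_swap (ha : a ∈ P.parityPart p) (hb : b ∈ P.parityPart q)
    (h : P.Br b a = 0) : P.Br a b = 0 := by
  simpa using br_eq_C_of_br_swap (u := 0) ha hb (by simpa using h)

lemma coeff_zero_br_mul_of_odd {d : A} (hd : d ∈ P.parityPart true) (hb : b ∈ P.parityPart q)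
    (c : A) : (P.Br d (b * c)).coeff 0 =
      (P.Br d b).coeff 0 * c + paritySign q • (b * (P.Br d c).coeff 0) := by
  rw [br_mul hd hb, coeff_add, coeff_mul_C, coeff_smul, coeff_C_mul, Bool.true_and]

lemma coeff_zero_br_of_br_swap_of_odd {d u v : A} (hd : d ∈ P.parityPart true)
    (hb : b ∈ P.parityPart q) (h : P.Br b d = C u + monomial 1 v) :
    (P.Br d b).coeff 0 = -paritySign q • (u - P.δ v) := by
  rw [br_eq_neg_koszul_smul_oppSubst hd hb, h, coeff_smul,
    coeff_zero_oppSubst_C_add_monomial_one, Bool.true_and]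

end PVA

namespace SuperSetup

variable {g : Type} [AddCommGroup g] [Module ℂ g] (D : SuperSetup g)

/-- The elements of `g` of parity `p`. -/
def parityPart (p : Bool) : Submodule ℂ g := Module.End.eigenspace D.σg (paritySign p)

variable {D} {p q : Bool} {a b : g}

lemma mem_parityPart : a ∈ D.parityPart p ↔ D.σg a = paritySign p • a :=
  Module.End.mem_eigenspace_iff

lemma mem_parityPart_false : a ∈ D.parityPart false ↔ D.σg a = a := by
  simp [mem_parityPart, paritySign]

lemma mem_parityPart_true : a ∈ D.parityPart true ↔ D.σg a = -a := by
  simp [mem_parityPart, paritySign]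

lemma _root_.IsParity.exists_mem_parityPart {ε : ℂ} (h : IsParity D a ε) :
    ∃ p, a ∈ D.parityPart p ∧ ε = paritySign p := by
  rcases h with ⟨hε, ha⟩ | ⟨hε, ha⟩
  · exact ⟨false, mem_parityPart_false.2 ha, hε⟩
  · exact ⟨true, mem_parityPart_true.2 ha, hε⟩

lemma lie_mem_parityPart (ha : a ∈ D.parityPart p) (hb : b ∈ D.parityPart q) :
    D.lie a b ∈ D.parityPart (p ^^ q) := by
  rw [mem_parityPart] at *
  simp only [D.σg_lie, ha, hb, map_smul, LinearMap.smul_apply, smul_smul, paritySign_xor,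
    mul_comm]

lemma lie_eq_neg_koszul_smul_lie (ha : a ∈ D.parityPart p) (hb : b ∈ D.parityPart q) :
    D.lie a b = -paritySign (p && q) • D.lie b a := by
  match p, q with
  | false, _ => simpa [paritySign] using D.lie_skew a b (.inl (mem_parityPart_false.1 ha))
  | true, false => simpa [paritySign] using D.lie_skew a b (.inr (mem_parityPart_false.1 hb))
  | true, true =>
    simpa [paritySign] using
      D.lie_skew_odd a b (mem_parityPart_true.1 ha) (mem_parityPart_true.1 hb)

lemma lie_lie_eq (ha : a ∈ D.parityPart p) (hb : b ∈ D.parityPart q) (c : g) :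
    D.lie (D.lie a b) c = D.lie a (D.lie b c) - paritySign (p && q) • D.lie b (D.lie a c) := by
  rw [eq_sub_iff_add_eq, eq_comm]
  match p, q with
  | false, _ => simpa [paritySign] using D.jacobi a b c (.inl (mem_parityPart_false.1 ha))
  | true, false => simpa [paritySign] using D.jacobi a b c (.inr (mem_parityPart_false.1 hb))
  | true, true =>
    simpa [paritySign, sub_eq_add_neg] using
      D.jacobi_odd a b c (mem_parityPart_true.1 ha) (mem_parityPart_true.1 hb)

lemma form_σg_left (a b : g) : D.form (D.σg a) b = D.form a (D.σg b) := by
  rw [← D.form_super, D.σg_invol]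

lemma paritySign_mul_form (ha : a ∈ D.parityPart p) (hb : b ∈ D.parityPart q) :
    paritySign p * D.form a b = paritySign q * D.form a b := by
  simpa [mem_parityPart.1 ha, mem_parityPart.1 hb] using D.form_σg_left a b

lemma form_eq_zero_of_parity_ne (ha : a ∈ D.parityPart p) (hb : b ∈ D.parityPart q)
    (hpq : p ≠ q) : D.form a b = 0 := by
  have h := paritySign_mul_form ha hb
  rw [Bool.eq_not_of_ne hpq, paritySign_not] at h
  refine (mul_eq_zero.1 (?_ : paritySign q * D.form a b = 0)).resolve_left ?_
  · linear_combination (-1 / 2 : ℂ) * h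
  · exact left_ne_zero_of_mul_eq_one (paritySign_mul_self q)

lemma mem_gwt {i : ℚ} : a ∈ D.gwt i ↔ D.lie D.x a = (i : ℂ) • a := by
  simp [gwt, sub_eq_zero]

lemma f_mem_gwt : D.f ∈ D.gwt (-1) := by
  simp [mem_gwt, D.lie_xf]

lemma lie_mem_gwt {i j : ℚ} (ha : a ∈ D.gwt i) (hb : b ∈ D.gwt j) :
    D.lie a b ∈ D.gwt (i + j) := by
  rw [mem_gwt] at *
  rw [D.jacobi _ _ _ (.inl D.x_even), ha, hb]
  simp [add_smul]

lemma form_lie_x_left (a b : g) : D.form (D.lie D.x a) b = -D.form a (D.lie D.x b) := by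
  rw [D.lie_skew _ _ (.inl D.x_even), map_neg, LinearMap.neg_apply, D.form_invariant]

lemma form_eq_zero_of_add_ne_zero {i j : ℚ} (ha : a ∈ D.gwt i) (hb : b ∈ D.gwt j)
    (hij : i + j ≠ 0) : D.form a b = 0 := by
  have h : (i : ℂ) * D.form a b = -((j : ℂ) * D.form a b) := by
    simpa [mem_gwt.1 ha, mem_gwt.1 hb] using D.form_lie_x_left a b
  refine (mul_eq_zero.1 (?_ : ((i + j : ℚ) : ℂ) * D.form a b = 0)).resolve_left ?_
  · push_cast
    linear_combination h
  · exact_mod_cast hij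

-- Supersymmetry of the form is inherited from the Lie bracket, because
-- `i (a|b) = (a|[x,b]) = -(x|[a,b])` and `i (b|a) = ([x,b]|a) = (x|[b,a])`.
lemma form_eq_koszul_mul_form {i : ℚ} (hi : i ≠ 0) (hbi : b ∈ D.gwt i)
    (ha : a ∈ D.parityPart p) (hb : b ∈ D.parityPart q) :
    D.form a b = paritySign (p && q) * D.form b a := by
  have hab : (i : ℂ) * D.form a b = -D.form D.x (D.lie a b) := by
    rw [← D.form_invariant, D.form_lie_x_left, mem_gwt.1 hbi, map_smul, smul_eq_mul, neg_neg]
  have hba : (i : ℂ) * D.form b a = D.form D.x (D.lie b a) := by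
    rw [← D.form_invariant, mem_gwt.1 hbi, map_smul, LinearMap.smul_apply, smul_eq_mul]
  refine mul_left_cancel₀ (Rat.cast_ne_zero.2 hi : (i : ℂ) ≠ 0) ?_
  rw [hab, lie_eq_neg_koszul_smul_lie ha hb, map_smul, smul_eq_mul, ← hba]
  ring

end SuperSetup

namespace BasisData

variable {g : Type} [AddCommGroup g] [Module ℂ g] {D : SuperSetup g}
  {I : Type} [Fintype I] [DecidableEq I] (Bs : BasisData D I)

/-- The projection of `g` onto `n = ⊕_{i > 0} g(i)`, complementary to `πle`. -/
def πgt (a : g) : g := ∑ α ∈ Bs.S, D.form a (Bs.udual α) • Bs.u α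

lemma u_mem_parityPart (α : I) : Bs.u α ∈ D.parityPart (Bs.par α) :=
  SuperSetup.mem_parityPart.2 (Bs.hσu α)

lemma udual_mem_parityPart (α : I) : Bs.udual α ∈ D.parityPart (Bs.par α) :=
  SuperSetup.mem_parityPart.2 (Bs.hσud α)

lemma sgn_eq_paritySign (α : I) : Bs.sgn α = paritySign (Bs.par α) := rfl

variable {Bs} in
lemma mem_S {α : I} : α ∈ Bs.S ↔ 0 < Bs.jdeg α := by simp [S]

lemma Shalf_subset_S : Bs.Shalf ⊆ Bs.S :=
  Finset.monotone_filter_right _ fun α _ (h : Bs.jdeg α = 1 / 2) ↦ by rw [h]; norm_num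

lemma πle_add_πgt (a : g) : Bs.πle a + Bs.πgt a = a := by
  conv_rhs => rw [← Bs.compl a]
  simp only [πle, πgt, S, ← not_le]
  exact Finset.sum_filter_add_sum_filter_not _ _ _

lemma map_πgt {M : Type*} [AddCommGroup M] [Module ℂ M] (L : g →ₗ[ℂ] M)
    (hL : ∀ i : ℚ, i ≤ 0 → ∀ a ∈ D.gwt i, L a = 0) (a : g) : L (Bs.πgt a) = L a := by
  have hπle : L (Bs.πle a) = 0 := by
    rw [πle, map_sum]
    refine Finset.sum_eq_zero fun α hα ↦ ?_
    rw [map_smul, hL _ (Finset.mem_filter.1 hα).2 _ (Bs.hu α), smul_zero]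
  rw [← zero_add (L (Bs.πgt a)), ← hπle, ← map_add, Bs.πle_add_πgt]

lemma form_πgt {j : ℚ} {c : g} (hj : j < 0) (hc : c ∈ D.gwt j) (a : g) :
    D.form (Bs.πgt a) c = D.form a c :=
  Bs.map_πgt (D.form.flip c)
    (fun _ hi _ hb ↦ SuperSetup.form_eq_zero_of_add_ne_zero hb hc (by linarith)) a

lemma πgt_eq_self {i : ℚ} {a : g} (hi : 0 < i) (ha : a ∈ D.gwt i) : Bs.πgt a = a := by
  have hπle : Bs.πle a = 0 := Finset.sum_eq_zero fun α hα ↦ by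
    have hα : Bs.jdeg α ≤ 0 := (Finset.mem_filter.1 hα).2
    rw [SuperSetup.form_eq_zero_of_add_ne_zero ha (Bs.hud α) (by linarith), zero_smul]
  simpa [hπle] using Bs.πle_add_πgt a

lemma πgt_mem_parityPart {p : Bool} {a : g} (ha : a ∈ D.parityPart p) :
    Bs.πgt a ∈ D.parityPart p := by
  refine Submodule.sum_mem _ fun α _ ↦ ?_
  by_cases hp : p = Bs.par α
  · exact hp ▸ Submodule.smul_mem _ _ (Bs.u_mem_parityPart α)
  · rw [SuperSetup.form_eq_zero_of_parity_ne ha (Bs.udual_mem_parityPart α) hp, zero_smul]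
    exact zero_mem _

lemma sum_sgn_smul_form_smul_map {M : Type*} [AddCommGroup M] [Module ℂ M] (L : g →ₗ[ℂ] M)
    {p : Bool} {a : g} (ha : a ∈ D.parityPart p) :
    ∑ α ∈ Bs.S, Bs.sgn α • D.form a (Bs.udual α) • L (Bs.u α) = paritySign p • L (Bs.πgt a) := by
  simp only [πgt, map_sum, map_smul, Finset.smul_sum, smul_smul, sgn_eq_paritySign,
    SuperSetup.paritySign_mul_form ha (Bs.udual_mem_parityPart _)]

end BasisData

namespace BRST

variable {g : Type} [AddCommGroup g] [Module ℂ g] {D : SuperSetup g}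
  {I : Type} [Fintype I] [DecidableEq I] {Bs : BasisData D I}
  {A : Type} [Ring A] [Algebra ℂ A] {P : PVA A} {k : ℂ} (R : BRST D Bs P k)

/-- The ghost part `a ↦ ∑_{α∈S} φ^α φ_{[u_α,a]}` of the building block `J_a`. -/
def ghost : g →ₗ[ℂ] A :=
  ∑ α ∈ Bs.S, LinearMap.mulLeft ℂ (R.φd (Bs.udual α)) ∘ₗ R.φc ∘ₗ D.lie (Bs.u α)

lemma ghost_apply (a : g) :
    R.ghost a = ∑ α ∈ Bs.S, R.φd (Bs.udual α) * R.φc (D.lie (Bs.u α) a) := by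
  simp [ghost]

lemma Jel_eq_ι_add_ghost (a : g) : R.Jel a = R.ι a + R.ghost a := by
  rw [ghost_apply, Jel]

lemma Jel_add (a b : g) : R.Jel (a + b) = R.Jel a + R.Jel b := by
  simp only [Jel_eq_ι_add_ghost, map_add]
  abel

lemma dd_eq : R.dd =
    ∑ α ∈ Bs.S, Bs.sgn α • (R.φd (Bs.udual α) * R.ι (Bs.u α))
      + ∑ α ∈ Bs.Shalf, R.φd (Bs.udual α) * R.Φn (Bs.u α)
      + R.φd D.f
      + (1 / 2 : ℂ) • ∑ α ∈ Bs.S, Bs.sgn α • (R.φd (Bs.udual α) * R.ghost (Bs.u α)) := by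
  simp only [dd, ghost_apply, Finset.mul_sum, Finset.smul_sum]

section Parity

variable {p : Bool} {a : g}

lemma ι_mem_parityPart (ha : a ∈ D.parityPart p) : R.ι a ∈ P.parityPart p := by
  rw [PVA.mem_parityPart, R.σι, SuperSetup.mem_parityPart.1 ha, map_smul]

lemma Φn_mem_parityPart (ha : a ∈ D.parityPart p) : R.Φn a ∈ P.parityPart p := by
  rw [PVA.mem_parityPart, R.σΦ, SuperSetup.mem_parityPart.1 ha, map_smul]

lemma φc_mem_parityPart (ha : a ∈ D.parityPart p) : R.φc a ∈ P.parityPart (!p) := by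
  rw [PVA.mem_parityPart, R.σφc, SuperSetup.mem_parityPart.1 ha, map_smul, paritySign_not,
    neg_smul]

lemma φd_mem_parityPart (ha : a ∈ D.parityPart p) : R.φd a ∈ P.parityPart (!p) := by
  rw [PVA.mem_parityPart, R.σφd, SuperSetup.mem_parityPart.1 ha, map_smul, paritySign_not,
    neg_smul]

lemma φd_udual_mem_parityPart (α : I) : R.φd (Bs.udual α) ∈ P.parityPart (!Bs.par α) :=
  R.φd_mem_parityPart (Bs.udual_mem_parityPart α)

lemma ghost_mem_parityPart (ha : a ∈ D.parityPart p) : R.ghost a ∈ P.parityPart p := by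
  rw [ghost_apply]
  refine Submodule.sum_mem _ fun α _ ↦ ?_
  simpa using PVA.mul_mem_parityPart (R.φd_udual_mem_parityPart α)
    (R.φc_mem_parityPart (SuperSetup.lie_mem_parityPart (Bs.u_mem_parityPart α) ha))

lemma φd_udual_mul_mem_parityPart {α : I} {y : A} (hy : y ∈ P.parityPart (Bs.par α)) :
    R.φd (Bs.udual α) * y ∈ P.parityPart true := by
  simpa using PVA.mul_mem_parityPart (R.φd_udual_mem_parityPart α) hy

lemma dd_mem_parityPart : R.dd ∈ P.parityPart true := by
  have hu := Bs.u_mem_parityPart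
  have currents : ∑ α ∈ Bs.S, Bs.sgn α • (R.φd (Bs.udual α) * R.ι (Bs.u α)) ∈
      P.parityPart true :=
    Submodule.sum_mem _ fun α _ ↦ Submodule.smul_mem _ _
      (R.φd_udual_mul_mem_parityPart (R.ι_mem_parityPart (hu α)))
  have neutrals : ∑ α ∈ Bs.Shalf, R.φd (Bs.udual α) * R.Φn (Bs.u α) ∈ P.parityPart true :=
    Submodule.sum_mem _ fun α _ ↦
      R.φd_udual_mul_mem_parityPart (R.Φn_mem_parityPart (hu α))
  have hf : R.φd D.f ∈ P.parityPart true :=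
    R.φd_mem_parityPart (p := false) (SuperSetup.mem_parityPart_false.2 D.f_even)
  have ghosts : ∑ α ∈ Bs.S, Bs.sgn α • (R.φd (Bs.udual α) * R.ghost (Bs.u α)) ∈
      P.parityPart true :=
    Submodule.sum_mem _ fun α _ ↦ Submodule.smul_mem _ _
      (R.φd_udual_mul_mem_parityPart (R.ghost_mem_parityPart (hu α)))
  rw [dd_eq]
  exact Submodule.add_mem _ (Submodule.add_mem _ (Submodule.add_mem _ currents neutrals) hf)
    (Submodule.smul_mem _ _ ghosts)

end Parity

section Differential

lemma d0_eq_of_br_dd {q : Bool} {b u v : A} (hb : b ∈ P.parityPart q)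
    (h : P.Br b R.dd = C u + monomial 1 v) : R.d0 b = -paritySign q • (u - P.δ v) :=
  PVA.coeff_zero_br_of_br_swap_of_odd R.dd_mem_parityPart hb h

lemma d0_eq_of_br_dd_eq_C {q : Bool} {b u : A} (hb : b ∈ P.parityPart q)
    (h : P.Br b R.dd = C u) : R.d0 b = -paritySign q • u := by
  simpa using R.d0_eq_of_br_dd (v := 0) hb (by simpa using h)

lemma d0_φd_mul (α : I) (y : A) :
    R.d0 (R.φd (Bs.udual α) * y) =
      R.d0 (R.φd (Bs.udual α)) * y - Bs.sgn α • (R.φd (Bs.udual α) * R.d0 y) := by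
  have h := PVA.coeff_zero_br_mul_of_odd R.dd_mem_parityPart (R.φd_udual_mem_parityPart α) y
  rw [paritySign_not, neg_smul, ← sub_eq_add_neg] at h
  exact h

end Differential

section Currents

variable {p : Bool} {a : g}

lemma br_ι_φd_mul (ha : a ∈ D.parityPart p) (α : I) (y : A) :
    P.Br (R.ι a) (R.φd (Bs.udual α) * y) =
      paritySign (p && !Bs.par α) • (C (R.φd (Bs.udual α)) * P.Br (R.ι a) y) := by
  rw [PVA.br_mul (R.ι_mem_parityPart ha) (R.φd_udual_mem_parityPart α), R.br_curφd, zero_mul,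
    zero_add]

lemma br_ι_ghost (ha : a ∈ D.parityPart p) (b : g) : P.Br (R.ι a) (R.ghost b) = 0 := by
  simp only [ghost_apply, map_sum, R.br_ι_φd_mul ha, R.br_curφc, mul_zero, smul_zero,
    Finset.sum_const_zero]

lemma br_ι_ι_u (ha : a ∈ D.parityPart p) {α : I} (hα : α ∈ Bs.S) :
    P.Br (R.ι a) (R.ι (Bs.u α)) = paritySign (p && Bs.par α) •
      (-C (R.ι (D.lie (Bs.u α) a)) +
        monomial 1 (algebraMap ℂ A (k * D.form (Bs.u α) a))) := by
  have hlie := SuperSetup.lie_eq_neg_koszul_smul_lie ha (Bs.u_mem_parityPart α)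
  have hform := SuperSetup.form_eq_koszul_mul_form (BasisData.mem_S.1 hα).ne' (Bs.hu α) ha
    (Bs.u_mem_parityPart α)
  rw [R.br_cur, hlie, hform, mul_left_comm, map_mul, ← Algebra.smul_def, map_smul, neg_smul,
    smul_add, smul_neg, smul_C, smul_monomial, C_neg]

lemma br_ι_φd_mul_ι (ha : a ∈ D.parityPart p) {α : I} (hα : α ∈ Bs.S) :
    P.Br (R.ι a) (Bs.sgn α • (R.φd (Bs.udual α) * R.ι (Bs.u α))) =
      C (-paritySign p • Bs.sgn α • (R.φd (Bs.udual α) * R.ι (D.lie (Bs.u α) a))) +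
      monomial 1
        (paritySign p • (k * Bs.sgn α * D.form (Bs.u α) a) • R.φd (Bs.udual α)) := by
  have hsign : Bs.sgn α * paritySign (p && !Bs.par α) * paritySign (p && Bs.par α) =
      paritySign p * Bs.sgn α := by
    rw [paritySign_and_not]
    linear_combination paritySign p * Bs.sgn α * paritySign_mul_self (p && Bs.par α)
  rw [map_smul, R.br_ι_φd_mul ha, R.br_ι_ι_u ha hα, mul_smul_comm, smul_smul, smul_smul, hsign,
    mul_add, mul_neg, ← C_mul, C_mul_monomial, ← Algebra.commutes, ← Algebra.smul_def, smul_add,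
    smul_neg, smul_C, smul_monomial, ← C_neg]
  simp only [smul_smul, neg_smul, neg_mul]
  ring_nf

lemma d0_ι (ha : a ∈ D.parityPart p) :
    R.d0 (R.ι a) =
      ∑ α ∈ Bs.S, Bs.sgn α • (R.φd (Bs.udual α) * R.ι (D.lie (Bs.u α) a))
        + ∑ α ∈ Bs.S, (k * Bs.sgn α * D.form (Bs.u α) a) • P.δ (R.φd (Bs.udual α)) := by
  have hbr : P.Br (R.ι a) R.dd =
      C (-paritySign p •
        ∑ α ∈ Bs.S, Bs.sgn α • (R.φd (Bs.udual α) * R.ι (D.lie (Bs.u α) a))) +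
      monomial 1 (paritySign p •
        ∑ α ∈ Bs.S, (k * Bs.sgn α * D.form (Bs.u α) a) • R.φd (Bs.udual α)) := by
    have neutrals (α : I) : P.Br (R.ι a) (R.φd (Bs.udual α) * R.Φn (Bs.u α)) = 0 := by
      rw [R.br_ι_φd_mul ha, R.br_curΦ, mul_zero, smul_zero]
    have ghosts (α : I) : P.Br (R.ι a) (R.φd (Bs.udual α) * R.ghost (Bs.u α)) = 0 := by
      rw [R.br_ι_φd_mul ha, R.br_ι_ghost ha, mul_zero, smul_zero]
    rw [dd_eq, map_add, map_add, map_add, map_smul, R.br_curφd, map_sum, map_sum, map_sum,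
      Finset.sum_congr rfl fun α hα ↦ R.br_ι_φd_mul_ι ha hα]
    simp only [map_smul, neutrals, ghosts, smul_zero, Finset.sum_const_zero, add_zero,
      Finset.smul_sum, map_sum, Finset.sum_add_distrib]
  rw [R.d0_eq_of_br_dd (R.ι_mem_parityPart ha) hbr]
  simp only [map_smul, map_sum, smul_sub, smul_neg, smul_smul, neg_mul, paritySign_mul_self,
    neg_smul, neg_neg, one_smul, sub_neg_eq_add]

end Currents

section Ghosts

variable {p : Bool} {b : g}

lemma br_φc_φd {j : ℚ} {c : g} (hj : j < 0) (hc : c ∈ D.gwt j) (b : g) :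
    P.Br (R.φc b) (R.φd c) = C (algebraMap ℂ A (D.form b c)) := by
  rw [← Bs.map_πgt R.φc R.φc_proj, ← Bs.form_πgt hj hc, BasisData.πgt]
  simp only [map_sum, map_smul, LinearMap.sum_apply, LinearMap.smul_apply]
  refine Finset.sum_congr rfl fun α hα ↦ ?_
  rw [R.br_φφd _ _ (BasisData.mem_S.1 hα) hj _ (Bs.hu α) _ hc, smul_eq_mul, map_mul,
    ← Algebra.smul_def, smul_C]

lemma br_φc_φd_mul (hb : b ∈ D.parityPart p) {α : I} (hα : α ∈ Bs.S) (y : A) :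
    P.Br (R.φc b) (R.φd (Bs.udual α) * y) =
      C (D.form b (Bs.udual α) • y) +
        paritySign (!p && !Bs.par α) • (C (R.φd (Bs.udual α)) * P.Br (R.φc b) y) := by
  rw [PVA.br_mul (R.φc_mem_parityPart hb) (R.φd_udual_mem_parityPart α),
    R.br_φc_φd (neg_lt_zero.2 (BasisData.mem_S.1 hα)) (Bs.hud α), ← C_mul, ← Algebra.smul_def]

lemma br_φc_ι_u (hb : b ∈ D.parityPart p) (α : I) : P.Br (R.φc b) (R.ι (Bs.u α)) = 0 :=
  PVA.br_eq_zero_of_br_swap (R.φc_mem_parityPart hb)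
    (R.ι_mem_parityPart (Bs.u_mem_parityPart α)) (R.br_curφc _ _)

lemma br_φc_ghost (hb : b ∈ D.parityPart p) (a : g) :
    P.Br (R.φc b) (R.ghost a) = C (R.φc (D.lie (Bs.πgt b) a)) := by
  rw [ghost_apply, BasisData.πgt]
  simp only [map_sum, map_smul, LinearMap.sum_apply, LinearMap.smul_apply]
  refine Finset.sum_congr rfl fun α hα ↦ ?_
  rw [R.br_φc_φd_mul hb hα, R.br_φφ, mul_zero, smul_zero, add_zero]

lemma sum_form_smul_Φn (b : g) :
    ∑ α ∈ Bs.Shalf, D.form b (Bs.udual α) • R.Φn (Bs.u α) = R.Φn b := by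
  conv_rhs => rw [← Bs.compl b, map_sum]
  refine Finset.sum_subset_zero_on_sdiff (Finset.subset_univ _) (fun α hα ↦ ?_)
    fun α _ ↦ (map_smul _ _ _).symm
  have hα : Bs.jdeg α ≠ 1 / 2 := by simpa [BasisData.Shalf] using hα
  rw [map_smul, R.Φn_proj _ hα _ (Bs.hu α), smul_zero]

/-- Both ghost factors `φ^α`, `φ^β` of the cubic term of `d` contract with `φ_b`, with equal
contributions, which cancels the coefficient `1/2`. -/
lemma br_φc_sum_φd_mul_ghost (hb : b ∈ D.parityPart p) :
    P.Br (R.φc b) (∑ α ∈ Bs.S, Bs.sgn α • (R.φd (Bs.udual α) * R.ghost (Bs.u α))) =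
      C ((2 * paritySign p) • R.ghost (Bs.πgt b)) := by
  have reorder (α : I) : Bs.sgn α • paritySign (!p && !Bs.par α) •
      (R.φd (Bs.udual α) * R.φc (D.lie (Bs.πgt b) (Bs.u α))) =
        paritySign p • (R.φd (Bs.udual α) * R.φc (D.lie (Bs.u α) (Bs.πgt b))) := by
    have hsign : Bs.sgn α * paritySign (!p && !Bs.par α) * -paritySign (p && Bs.par α) =
        paritySign p := by
      rw [paritySign_not_and_not, Bs.sgn_eq_paritySign]
      linear_combination paritySign p * paritySign (p && Bs.par α) *
        paritySign (p && Bs.par α) * paritySign_mul_self (Bs.par α) +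
        paritySign p * paritySign_mul_self (p && Bs.par α)
    rw [SuperSetup.lie_eq_neg_koszul_smul_lie (Bs.πgt_mem_parityPart hb) (Bs.u_mem_parityPart α),
      map_smul, mul_smul_comm, smul_smul, smul_smul, hsign]
  calc P.Br (R.φc b) (∑ α ∈ Bs.S, Bs.sgn α • (R.φd (Bs.udual α) * R.ghost (Bs.u α)))
      = ∑ α ∈ Bs.S, C (Bs.sgn α • D.form b (Bs.udual α) • R.ghost (Bs.u α) +
          Bs.sgn α • paritySign (!p && !Bs.par α) •
            (R.φd (Bs.udual α) * R.φc (D.lie (Bs.πgt b) (Bs.u α)))) := by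
        rw [map_sum]
        refine Finset.sum_congr rfl fun α hα ↦ ?_
        rw [map_smul, R.br_φc_φd_mul hb hα, R.br_φc_ghost hb, ← C_mul, smul_C, ← C_add, smul_C,
          smul_add]
    _ = C (paritySign p • R.ghost (Bs.πgt b) + paritySign p • R.ghost (Bs.πgt b)) := by
        rw [← map_sum, Finset.sum_add_distrib, Bs.sum_sgn_smul_form_smul_map _ hb]
        simp only [reorder, ← Finset.smul_sum, ← R.ghost_apply]
    _ = C ((2 * paritySign p) • R.ghost (Bs.πgt b)) := by rw [two_mul, add_smul]

lemma br_φc_dd (hb : b ∈ D.parityPart p) :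
    P.Br (R.φc b) R.dd =
      C (paritySign p • R.Jel (Bs.πgt b) + R.Φn b + algebraMap ℂ A (D.form b D.f)) := by
  have currents :
      P.Br (R.φc b) (∑ α ∈ Bs.S, Bs.sgn α • (R.φd (Bs.udual α) * R.ι (Bs.u α))) =
        C (paritySign p • R.ι (Bs.πgt b)) := by
    rw [← Bs.sum_sgn_smul_form_smul_map R.ι hb, map_sum, map_sum]
    refine Finset.sum_congr rfl fun α hα ↦ ?_
    rw [map_smul, R.br_φc_φd_mul hb hα, R.br_φc_ι_u hb, mul_zero, smul_zero, add_zero, smul_C]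
  have neutrals :
      P.Br (R.φc b) (∑ α ∈ Bs.Shalf, R.φd (Bs.udual α) * R.Φn (Bs.u α)) = C (R.Φn b) := by
    rw [← R.sum_form_smul_Φn b, map_sum, map_sum]
    refine Finset.sum_congr rfl fun α hα ↦ ?_
    rw [R.br_φc_φd_mul hb (Bs.Shalf_subset_S hα), R.br_φcΦ, mul_zero, smul_zero, add_zero]
  have hf := R.br_φc_φd (by norm_num) SuperSetup.f_mem_gwt b
  rw [dd_eq, map_add, map_add, map_add, map_smul, currents, neutrals, hf,
    R.br_φc_sum_φd_mul_ghost hb, smul_C, smul_smul, ← mul_assoc, one_div_mul_cancel two_ne_zero,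
    one_mul, ← C_add, ← C_add, ← C_add, Jel_eq_ι_add_ghost, smul_add]
  congr 1
  abel

lemma d0_φc (hb : b ∈ D.parityPart p) :
    R.d0 (R.φc b) =
      R.Jel (Bs.πgt b) + paritySign p • R.Φn b + algebraMap ℂ A (D.form b D.f) := by
  have hf : paritySign p • algebraMap ℂ A (D.form b D.f) = algebraMap ℂ A (D.form b D.f) := by
    rw [Algebra.smul_def, ← map_mul, SuperSetup.paritySign_mul_form hb
      (SuperSetup.mem_parityPart_false.2 D.f_even)]
    simp [paritySign]
  rw [R.d0_eq_of_br_dd_eq_C (R.φc_mem_parityPart hb) (R.br_φc_dd hb), paritySign_not, neg_neg,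
    smul_add, smul_add, smul_smul, paritySign_mul_self, one_smul, hf]

lemma Kel_eq_Jel_sub_d0_φc (hb : b ∈ D.parityPart p) :
    R.Kel b (paritySign p) = R.Jel b - R.d0 (R.φc b) := by
  have hJ : R.Jel b = R.Jel (Bs.πle b) + R.Jel (Bs.πgt b) := by rw [← Jel_add, Bs.πle_add_πgt]
  rw [Kel, R.d0_φc hb, hJ]
  abel

end Ghosts

section MaurerCartan

variable {p : Bool} {b : g}

lemma br_φd_ι_u (γ α : I) : P.Br (R.φd (Bs.udual γ)) (R.ι (Bs.u α)) = 0 :=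
  PVA.br_eq_zero_of_br_swap (R.φd_udual_mem_parityPart γ)
    (R.ι_mem_parityPart (Bs.u_mem_parityPart α)) (R.br_curφd _ _)

lemma br_φd_φc {γ : I} (hγ : γ ∈ Bs.S) (hb : b ∈ D.parityPart p) :
    P.Br (R.φd (Bs.udual γ)) (R.φc b) =
      C (algebraMap ℂ A (Bs.sgn γ * D.form b (Bs.udual γ))) := by
  rw [PVA.br_eq_C_of_br_swap (R.φd_udual_mem_parityPart γ) (R.φc_mem_parityPart hb)
    (R.br_φc_φd (neg_lt_zero.2 (BasisData.mem_S.1 hγ)) (Bs.hud γ) b),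
    Algebra.smul_def, ← map_mul]
  congr 2
  by_cases hp : p = Bs.par γ
  · rw [hp, Bs.sgn_eq_paritySign]
    cases Bs.par γ <;> simp [paritySign]
  · simp [SuperSetup.form_eq_zero_of_parity_ne hb (Bs.udual_mem_parityPart γ) hp]

lemma br_φd_φd_mul (γ α : I) (y : A) :
    P.Br (R.φd (Bs.udual γ)) (R.φd (Bs.udual α) * y) =
      paritySign (!Bs.par γ && !Bs.par α) •
        (C (R.φd (Bs.udual α)) * P.Br (R.φd (Bs.udual γ)) y) := by
  rw [PVA.br_mul (R.φd_udual_mem_parityPart γ) (R.φd_udual_mem_parityPart α), R.br_φdφd, zero_mul,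
    zero_add]

lemma br_φd_φd_mul_ghost {γ : I} (hγ : γ ∈ Bs.S) (α : I) :
    P.Br (R.φd (Bs.udual γ)) (R.φd (Bs.udual α) * R.ghost (Bs.u α)) =
      C (Bs.sgn γ • ∑ β ∈ Bs.S, D.form (D.lie (Bs.u β) (Bs.u α)) (Bs.udual γ) •
        (R.φd (Bs.udual α) * R.φd (Bs.udual β))) := by
  simp only [ghost_apply, Finset.mul_sum, Finset.smul_sum, map_sum]
  refine Finset.sum_congr rfl fun β _ ↦ ?_
  have hlie := SuperSetup.lie_mem_parityPart (Bs.u_mem_parityPart β) (Bs.u_mem_parityPart α)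
  rw [R.br_φd_φd_mul, R.br_φd_φd_mul, R.br_φd_φc hγ hlie]
  by_cases hp : (Bs.par β ^^ Bs.par α) = Bs.par γ
  · have hsign : paritySign (!Bs.par γ && !Bs.par α) * paritySign (!Bs.par γ && !Bs.par β) = 1 := by
      rw [← hp]
      cases Bs.par α <;> cases Bs.par β <;> simp [paritySign]
    rw [mul_smul_comm, smul_smul, hsign, one_smul, ← C_mul, ← C_mul, ← Algebra.commutes,
      ← Algebra.smul_def, mul_smul_comm, smul_smul]
  · simp [SuperSetup.form_eq_zero_of_parity_ne hlie (Bs.udual_mem_parityPart γ) hp]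

lemma d0_φd {γ : I} (hγ : γ ∈ Bs.S) :
    R.d0 (R.φd (Bs.udual γ)) = (1 / 2 : ℂ) • ∑ α ∈ Bs.S, Bs.sgn α •
      ∑ β ∈ Bs.S, D.form (D.lie (Bs.u β) (Bs.u α)) (Bs.udual γ) •
        (R.φd (Bs.udual α) * R.φd (Bs.udual β)) := by
  have hbr : P.Br (R.φd (Bs.udual γ)) R.dd =
      C (Bs.sgn γ • (1 / 2 : ℂ) • ∑ α ∈ Bs.S, Bs.sgn α •
        ∑ β ∈ Bs.S, D.form (D.lie (Bs.u β) (Bs.u α)) (Bs.udual γ) •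
          (R.φd (Bs.udual α) * R.φd (Bs.udual β))) := by
    simp only [dd_eq, map_add, map_sum, map_smul, R.br_φd_φd_mul_ghost hγ]
    simp only [R.br_φd_φd_mul, R.br_φd_ι_u, R.br_φdΦ, R.br_φdφd, mul_zero, smul_zero,
      Finset.sum_const_zero, zero_add, smul_C, ← map_sum, smul_comm _ (Bs.sgn γ),
      ← Finset.smul_sum]
  rw [R.d0_eq_of_br_dd_eq_C (R.φd_udual_mem_parityPart γ) hbr, paritySign_not, neg_neg,
    Bs.sgn_eq_paritySign, smul_smul, paritySign_mul_self, one_smul]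

lemma sum_d0_φd_mul_map (L : g →ₗ[ℂ] A) :
    ∑ γ ∈ Bs.S, R.d0 (R.φd (Bs.udual γ)) * L (Bs.u γ) =
      (1 / 2 : ℂ) • ∑ α ∈ Bs.S, ∑ β ∈ Bs.S, Bs.sgn α •
        (R.φd (Bs.udual α) * R.φd (Bs.udual β) * L (D.lie (Bs.u β) (Bs.u α))) := by
  have expand {α β : I} (hα : α ∈ Bs.S) (hβ : β ∈ Bs.S) :
      L (D.lie (Bs.u β) (Bs.u α)) =
        ∑ γ ∈ Bs.S, D.form (D.lie (Bs.u β) (Bs.u α)) (Bs.udual γ) • L (Bs.u γ) := by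
    have hpos := add_pos (BasisData.mem_S.1 hβ) (BasisData.mem_S.1 hα)
    conv_lhs => rw [← Bs.πgt_eq_self hpos (SuperSetup.lie_mem_gwt (Bs.hu β) (Bs.hu α))]
    simp only [BasisData.πgt, map_sum, map_smul]
  rw [Finset.sum_congr rfl fun γ hγ ↦ by rw [R.d0_φd hγ]]
  simp only [smul_mul_assoc, ← Finset.smul_sum, Finset.sum_mul]
  congr 1
  rw [Finset.sum_comm]
  refine Finset.sum_congr rfl fun α hα ↦ ?_
  rw [← Finset.smul_sum, Finset.sum_comm]
  congr 1
  refine Finset.sum_congr rfl fun β hβ ↦ ?_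
  rw [expand hα hβ, Finset.mul_sum]
  simp only [mul_smul_comm]

lemma sgn_smul_φd_mul_φd (α β : I) :
    Bs.sgn α • (R.φd (Bs.udual α) * R.φd (Bs.udual β)) =
      -(paritySign (Bs.par β && Bs.par α) * Bs.sgn β) •
        (R.φd (Bs.udual β) * R.φd (Bs.udual α)) := by
  rw [PVA.mul_eq_koszul_smul_mul (R.φd_udual_mem_parityPart α) (R.φd_udual_mem_parityPart β),
    smul_smul, paritySign_not_and_not, Bool.and_comm, Bs.sgn_eq_paritySign, Bs.sgn_eq_paritySign]
  congr 1
  linear_combination -paritySign (Bs.par β) * paritySign (Bs.par β && Bs.par α) *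
    paritySign_mul_self (Bs.par α)

lemma sum_d0_φd_mul_φc_lie (a : g) :
    ∑ γ ∈ Bs.S, R.d0 (R.φd (Bs.udual γ)) * R.φc (D.lie (Bs.u γ) a) =
      ∑ α ∈ Bs.S, Bs.sgn α • (R.φd (Bs.udual α) * R.ghost (D.lie (Bs.u α) a)) := by
  let T (α β : I) : A := Bs.sgn α •
    (R.φd (Bs.udual α) * R.φd (Bs.udual β) * R.φc (D.lie (Bs.u β) (D.lie (Bs.u α) a)))
  have jacobi (α β : I) : Bs.sgn α • (R.φd (Bs.udual α) * R.φd (Bs.udual β) *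
      R.φc (D.lie (D.lie (Bs.u β) (Bs.u α)) a)) = T α β + T β α := by
    rw [SuperSetup.lie_lie_eq (Bs.u_mem_parityPart β) (Bs.u_mem_parityPart α), map_sub, mul_sub,
      smul_sub, sub_eq_add_neg]
    congr 1
    rw [← smul_mul_assoc, sgn_smul_φd_mul_φd, map_smul, mul_smul_comm, smul_mul_assoc, smul_smul,
      mul_neg, ← mul_assoc, paritySign_mul_self, one_mul, neg_smul, neg_neg]
  calc ∑ γ ∈ Bs.S, R.d0 (R.φd (Bs.udual γ)) * R.φc (D.lie (Bs.u γ) a)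
      = (1 / 2 : ℂ) • ∑ α ∈ Bs.S, ∑ β ∈ Bs.S, (T α β + T β α) := by
        simp only [← jacobi]
        exact R.sum_d0_φd_mul_map (R.φc ∘ₗ D.lie.flip a)
    _ = (1 / 2 : ℂ) • (∑ α ∈ Bs.S, ∑ β ∈ Bs.S, T α β + ∑ α ∈ Bs.S, ∑ β ∈ Bs.S, T α β) := by
        simp only [Finset.sum_add_distrib]
        rw [Finset.sum_comm (f := fun α β ↦ T β α)]
    _ = ∑ α ∈ Bs.S, ∑ β ∈ Bs.S, T α β := by
        rw [← two_smul ℂ, smul_smul, one_div_mul_cancel two_ne_zero, one_smul]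
    _ = ∑ α ∈ Bs.S, Bs.sgn α • (R.φd (Bs.udual α) * R.ghost (D.lie (Bs.u α) a)) := by
        simp only [T, ghost_apply, Finset.mul_sum, Finset.smul_sum, mul_assoc]

lemma d0_ghost (a : g) :
    R.d0 (R.ghost a) = ∑ α ∈ Bs.S, Bs.sgn α • (R.φd (Bs.udual α) *
      (R.ghost (D.lie (Bs.u α) a) - R.d0 (R.φc (D.lie (Bs.u α) a)))) := by
  conv_lhs => rw [ghost_apply, map_sum]
  simp only [d0_φd_mul, mul_sub, smul_sub, Finset.sum_sub_distrib, sum_d0_φd_mul_φc_lie]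

end MaurerCartan

end BRST

/-- For `a ∈ g` let `J_a = a + ∑_{α∈S} φ^α φ_{[u_α,a]}` and
`K_a = J_{π_≤ a} - (-1)^{p(a)} Φ_a - (a|f)`.  Then for homogeneous `a` (of parity
sign `ε`):
`d_{(0)}(J_a) = ∑_{α∈S} (-1)^{p(α)} φ^α K_{[u_α,a]}
  + ∑_{α∈S} k (-1)^{p(α)} (u_α|a) ∂φ^α`. -/
theorem statement4
    (g : Type) [AddCommGroup g] [Module ℂ g] (D : SuperSetup g)
    (I : Type) [Fintype I] [DecidableEq I] (Bs : BasisData D I)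
    (A : Type) [Ring A] [Algebra ℂ A] (P : PVA A) (k : ℂ)
    (R : BRST D Bs P k)
    (a : g) (ε : ℂ) (ha : IsParity D a ε) :
    R.d0 (R.Jel a) =
      (∑ α ∈ Bs.S, Bs.sgn α • (R.φd (Bs.udual α) * R.Kel (D.lie (Bs.u α) a) (Bs.sgn α * ε)))
        + ∑ α ∈ Bs.S, (k * Bs.sgn α * D.form (Bs.u α) a) • P.δ (R.φd (Bs.udual α)) := by
  obtain ⟨p, hp, rfl⟩ := ha.exists_mem_parityPart
  have hK (α : I) : R.Kel (D.lie (Bs.u α) a) (Bs.sgn α * paritySign p) =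
      R.Jel (D.lie (Bs.u α) a) - R.d0 (R.φc (D.lie (Bs.u α) a)) := by
    rw [Bs.sgn_eq_paritySign, ← paritySign_xor]
    exact R.Kel_eq_Jel_sub_d0_φc (SuperSetup.lie_mem_parityPart (Bs.u_mem_parityPart α) hp)
  rw [R.Jel_eq_ι_add_ghost, map_add, R.d0_ι hp, R.d0_ghost, add_right_comm,
    ← Finset.sum_add_distrib]
  simp only [hK, R.Jel_eq_ι_add_ghost, add_sub_assoc, mul_add, smul_add]
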